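/- If λ, μ, ν are partitions of n with g_{λ,μ}^ν ≠ 0, then |d_λ − d_μ| ≤ d_ν ≤ d_λ + d_μ, where d_λ = n − λ_1 is the depth of λ. -/

import Mathlib

/-!
Fix a filling `f : Fin n → Fin n` and a sign `ε`, and let `youngProj ε f` be the sum of the
operators `ε σ • ρ σ` over the Young subgroup preserving the fibres of `f`.  It is nonzero on an
irreducible representation exactly when its trace, `youngSum ε f` of the character, is nonzero,
i.e. when there is an invariant (`ε = 1`) or alternating (`ε = sign`) vector.

*Bounds.*  Suppose the irreducible representations `V₁`, `V₂` have vectors invariant under the Young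
subgroups of the rows of `λ`, `μ`, that `V₃` has a vector alternating under the column group of
`ν`, and that `V₁ ⊗ V₂ ⊗ V₃` has an invariant.  The group average is then a nonzero invariant
trilinear map, and by irreducibility it does not vanish on suitable translates of the given vectors.
A transposition preserving a row of the translated `λ`, a row of the translated `μ` and a column of
`ν` would fix this value and negate it, so any three such fibres meet in at most one point
(`exists_translates_of_kronecker`).  Longest rows of `λ` and `μ` overlap in at least
`λ₁ + μ₁ - n` points, and these lie in different columns of `ν`, of which there are `ν₁`
(`depth_le_of_translates`).  This is `d_ν ≤ d_λ + d_μ`; the lower bound follows because `kron` is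
symmetric in its three arguments.

*Labelling.*  It remains to see that `χ p` has row invariants and column alternating vectors of shape
`p` (`exists_row_col`).  The Young symmetriser of `p` is nonzero, which gives an irreducible
character `X p` with both (`exists_isIrrChar_of_transverse`).  The same transposition argument shows
that row invariants of shape `q` and column alternating vectors of shape `p` force `p` to dominate
`q` (`IsIrrChar.dominates`).  So `p ↦ X p` is injective, and, by orthogonality of characters and
since partitions index the conjugacy classes, it reaches every irreducible character.  Finally, if
`χ p = X q`, then `hocc` makes `q` dominate `p` while `X q` occurs in the permutation character of
shape `q`, so `hnocc` forces `q = p`.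
-/


open scoped BigOperators

/-- `f : S_n → ℂ` is the character of an irreducible (complex) representation
of the symmetric group `S_n`. -/
def IsIrreducibleCharacter (n : ℕ) (f : Equiv.Perm (Fin n) → ℂ) : Prop :=
  ∃ V : FDRep ℂ (Equiv.Perm (Fin n)), CategoryTheory.Simple V ∧ V.character = f

/-- Given a family `χ` of functions on `S_n` indexed by partitions of `n`
(intended: the irreducible characters `χ_λ`), the Kronecker coefficient
`g_{λ,μ}^ν = (1/n!) Σ_{σ ∈ S_n} χ_λ(σ) χ_μ(σ) χ_ν(σ)`. -/
noncomputable def kron (n : ℕ) (χ : n.Partition → Equiv.Perm (Fin n) → ℂ)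
    (l m nu : n.Partition) : ℂ :=
  (Nat.factorial n : ℂ)⁻¹ * ∑ σ : Equiv.Perm (Fin n), χ l σ * χ m σ * χ nu σ
/-- The depth `d_λ = n − λ_1` of a partition `λ` of `n`. -/
def depthP (n : ℕ) (p : n.Partition) : ℕ := n - p.parts.sup

/-- The multiset of (nonzero) fiber sizes of a function `f : Fin n → Fin n`. -/
def contentMS (n : ℕ) (f : Fin n → Fin n) : Multiset ℕ :=
  (Finset.univ.val.map fun c => (Finset.univ.filter fun i => f i = c).card).filter
    (0 < ·)

/-- The character of the permutation representation of `S_n` on the Young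
tabloids of shape `λ` (functions `Fin n → Fin n` whose fiber sizes are the
parts of `λ`): its value at `σ` is the number of such functions fixed by
`σ`. -/
def permChar (n : ℕ) (p : n.Partition) (σ : Equiv.Perm (Fin n)) : ℕ :=
  (Finset.univ.filter fun f : Fin n → Fin n =>
    contentMS n f = p.parts ∧ f ∘ σ = f).card

/-- The standard inner product of class functions on `S_n`. -/
noncomputable def innerChar (n : ℕ) (f g : Equiv.Perm (Fin n) → ℂ) : ℂ :=
  (Nat.factorial n : ℂ)⁻¹ * ∑ σ : Equiv.Perm (Fin n), f σ * (starRingEnd ℂ) (g σ)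

/-- The sum of the `k` largest parts of a partition of `n`,
`Σ_{i=1}^k λ_i = Σ_{t=1}^n min(#{parts ≥ t}, k)`. -/
def topSum (n : ℕ) (p : n.Partition) (k : ℕ) : ℕ :=
  ∑ t ∈ Finset.Icc 1 n, min (p.parts.filter (t ≤ ·)).card k

/-- Dominance order: `p` dominates `q` if all partial sums of `p` are at least
those of `q`. -/
def Dominates (n : ℕ) (p q : n.Partition) : Prop :=
  ∀ k, topSum n q k ≤ topSum n p k

section KroneckerDepth

open Equiv

/-! ### Young projections -/

section RepTheory

variable {n : ℕ}

/-- The Young subgroup of permutations preserving the fibres of `f`, as a finset. -/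
def fibStab (f : Fin n → Fin n) : Finset (Perm (Fin n)) :=
  Finset.univ.filter fun σ => f ∘ σ = f

lemma mem_fibStab {f : Fin n → Fin n} {σ : Perm (Fin n)} :
    σ ∈ fibStab f ↔ f ∘ σ = f := by simp [fibStab]

lemma one_mem_fibStab (f : Fin n → Fin n) : 1 ∈ fibStab f := by
  rw [mem_fibStab]; rfl

lemma mul_mem_fibStab {f : Fin n → Fin n} {σ τ : Perm (Fin n)} (hσ : σ ∈ fibStab f)
    (hτ : τ ∈ fibStab f) : σ * τ ∈ fibStab f := by
  rw [mem_fibStab] at *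
  rw [Perm.coe_mul, ← Function.comp_assoc, hσ, hτ]

lemma inv_mem_fibStab {f : Fin n → Fin n} {σ : Perm (Fin n)} (hσ : σ ∈ fibStab f) :
    σ⁻¹ ∈ fibStab f := by
  rw [mem_fibStab] at *
  conv_lhs => rw [← hσ]
  ext x; simp

lemma swap_mem_fibStab {f : Fin n → Fin n} {i j : Fin n} (h : f i = f j) :
    swap i j ∈ fibStab f := by
  rw [mem_fibStab]
  ext x
  simp only [Function.comp_apply]
  rw [swap_apply_def]
  split_ifs with h1 h2
  · rw [h1, h]
  · rw [h2, h]
  · rfl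

/-- The complex value of a sign character `ε`. -/
def epsC (ε : Perm (Fin n) →* ℤˣ) (σ : Perm (Fin n)) : ℂ := ((ε σ : ℤ) : ℂ)

lemma epsC_mul (ε : Perm (Fin n) →* ℤˣ) (σ τ : Perm (Fin n)) :
    epsC ε (σ * τ) = epsC ε σ * epsC ε τ := by simp [epsC]

lemma epsC_sq (ε : Perm (Fin n) →* ℤˣ) (σ : Perm (Fin n)) :
    epsC ε σ * epsC ε σ = 1 := by
  simp only [epsC]
  rcases Int.units_eq_one_or (ε σ) with h | h <;> simp [h]

lemma epsC_inv (ε : Perm (Fin n) →* ℤˣ) (σ : Perm (Fin n)) :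
    epsC ε σ⁻¹ = epsC ε σ := by
  simp only [epsC, map_inv]
  rcases Int.units_eq_one_or (ε σ) with h | h <;> simp [h]

variable {V : Type*} [AddCommGroup V] [Module ℂ V]

/-- The unnormalised projection of a representation onto its `ε`-isotypic vectors under the
Young subgroup of `f`. -/
noncomputable def youngProj (ε : Perm (Fin n) →* ℤˣ) (f : Fin n → Fin n)
    (ρ : Representation ℂ (Perm (Fin n)) V) : V →ₗ[ℂ] V :=
  ∑ σ ∈ fibStab f, epsC ε σ • ρ σ

lemma map_youngProj (ε : Perm (Fin n) →* ℤˣ) (f : Fin n → Fin n)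
    (ρ : Representation ℂ (Perm (Fin n)) V) {τ : Perm (Fin n)} (hτ : τ ∈ fibStab f) (v : V) :
    ρ τ (youngProj ε f ρ v) = epsC ε τ • youngProj ε f ρ v := by
  simp only [youngProj, LinearMap.sum_apply, map_sum, Finset.smul_sum, LinearMap.smul_apply,
    map_smul]
  refine Finset.sum_bij' (fun σ _ => τ * σ) (fun σ _ => τ⁻¹ * σ)
    (fun σ hσ => mul_mem_fibStab hτ hσ) (fun σ hσ => mul_mem_fibStab (inv_mem_fibStab hτ) hσ)
    (by simp) (by simp) ?_
  intro σ _
  rw [epsC_mul, smul_smul, ← mul_assoc, epsC_sq, one_mul, map_mul, Module.End.mul_apply]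

lemma youngProj_map (ε : Perm (Fin n) →* ℤˣ) (f : Fin n → Fin n)
    (ρ : Representation ℂ (Perm (Fin n)) V) {τ : Perm (Fin n)} (hτ : τ ∈ fibStab f) (v : V) :
    youngProj ε f ρ (ρ τ v) = epsC ε τ • youngProj ε f ρ v := by
  simp only [youngProj, LinearMap.sum_apply, Finset.smul_sum, LinearMap.smul_apply]
  refine Finset.sum_bij' (fun σ _ => σ * τ) (fun σ _ => σ * τ⁻¹)
    (fun σ hσ => mul_mem_fibStab hσ hτ) (fun σ hσ => mul_mem_fibStab hσ (inv_mem_fibStab hτ))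
    (by simp) (by simp) ?_
  intro σ _
  rw [epsC_mul, smul_smul, mul_comm (epsC ε σ), ← mul_assoc, epsC_sq, one_mul, map_mul,
    Module.End.mul_apply]

/-- The unnormalised multiplicity of the linear character `ε` in a class function restricted to
the Young subgroup of `f`. -/
noncomputable def youngSum (ε : Perm (Fin n) →* ℤˣ) (f : Fin n → Fin n)
    (ψ : Perm (Fin n) → ℂ) : ℂ :=
  ∑ σ ∈ fibStab f, epsC ε σ * ψ σ

lemma trace_youngProj (ε : Perm (Fin n) →* ℤˣ) (f : Fin n → Fin n)
    (ρ : Representation ℂ (Perm (Fin n)) V) :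
    LinearMap.trace ℂ V (youngProj ε f ρ) = youngSum ε f ρ.character := by
  simp [youngProj, youngSum, Representation.character]

lemma card_fibStab_ne_zero (f : Fin n → Fin n) : ((fibStab f).card : ℂ) ≠ 0 := by
  have : (fibStab f).Nonempty := ⟨1, one_mem_fibStab f⟩
  exact_mod_cast this.card_pos.ne'

lemma isIdempotentElem_youngProj (ε : Perm (Fin n) →* ℤˣ) (f : Fin n → Fin n)
    (ρ : Representation ℂ (Perm (Fin n)) V) :
    IsIdempotentElem (((fibStab f).card : ℂ)⁻¹ • youngProj ε f ρ) := by
  have key : youngProj ε f ρ * youngProj ε f ρ = ((fibStab f).card : ℂ) • youngProj ε f ρ := by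
    ext v
    rw [Module.End.mul_apply]
    have expand : ∀ u, youngProj ε f ρ u = ∑ σ ∈ fibStab f, epsC ε σ • ρ σ u := by
      simp [youngProj]
    rw [expand (youngProj ε f ρ v), Finset.sum_congr rfl (g := fun _ => youngProj ε f ρ v)]
    · rw [Finset.sum_const, Nat.cast_smul_eq_nsmul, LinearMap.smul_apply]
    · intro σ hσ
      rw [map_youngProj ε f ρ hσ, smul_smul, epsC_sq, one_smul]
  rw [IsIdempotentElem, smul_mul_smul_comm, key, smul_smul]
  congr 1
  field_simp [card_fibStab_ne_zero f]

variable [FiniteDimensional ℂ V]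

/-- A multiple of `youngProj` is idempotent, and an idempotent with zero trace vanishes. -/
lemma youngSum_ne_zero_iff (ε : Perm (Fin n) →* ℤˣ) (f : Fin n → Fin n)
    (ρ : Representation ℂ (Perm (Fin n)) V) :
    youngSum ε f ρ.character ≠ 0 ↔ youngProj ε f ρ ≠ 0 := by
  have h := LinearMap.IsIdempotentElem.trace_eq_zero_iff (isIdempotentElem_youngProj ε f ρ)
  rw [map_smul, trace_youngProj, smul_eq_mul, mul_eq_zero, smul_eq_zero] at h
  simp only [inv_eq_zero, card_fibStab_ne_zero, false_or] at h
  exact not_congr h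

/-- The value is the order of the Young subgroup times the rank of the normalised projection. -/
lemma youngSum_eq_natCast (ε : Perm (Fin n) →* ℤˣ) (f : Fin n → Fin n)
    (ρ : Representation ℂ (Perm (Fin n)) V) :
    ∃ k : ℕ, youngSum ε f ρ.character = k := by
  have h := (LinearMap.IsIdempotentElem.isProj_range _ (isIdempotentElem_youngProj ε f ρ)).trace
  rw [map_smul, trace_youngProj, smul_eq_mul] at h
  refine ⟨(fibStab f).card * Module.finrank ℂ
    (LinearMap.range (((fibStab f).card : ℂ)⁻¹ • youngProj ε f ρ)), ?_⟩
  rw [Nat.cast_mul, ← h, mul_inv_cancel_left₀ (card_fibStab_ne_zero f)]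

end RepTheory

/-! ### Transversality from invariant and alternating vectors -/

section Irreducible

variable {n : ℕ}

/-- In an irreducible representation, the common kernel of a family of linear maps which the
group permutes (up to scalars) is zero unless the whole family vanishes. -/
lemma exists_apply_ne_zero {V U ι : Type*} [AddCommGroup V] [Module ℂ V] [AddCommGroup U]
    [Module ℂ U] (ρ : Representation ℂ (Perm (Fin n)) V) [hρ : ρ.IsIrreducible]
    (φ : ι → V →ₗ[ℂ] U) (hφ : ∀ i g, ∃ j, ∀ v, φ j v = 0 → φ i (ρ g v) = 0)
    (hne : ∃ i, φ i ≠ 0) {v : V} (hv : v ≠ 0) : ∃ i, φ i v ≠ 0 := by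
  by_contra! hcon
  let W : Subrepresentation ρ :=
    { toSubmodule := ⨅ i, LinearMap.ker (φ i)
      apply_mem_toSubmodule := by
        intro g v hv
        simp only [Submodule.mem_iInf, LinearMap.mem_ker] at hv ⊢
        intro i
        obtain ⟨j, hj⟩ := hφ i g
        exact hj v (hv j) }
  have hW : W.toSubmodule = ⨅ i, LinearMap.ker (φ i) := rfl
  rcases hρ.eq_bot_or_eq_top W with h | h
  · have hvW : v ∈ W.toSubmodule := by
      rw [hW]; simpa [Submodule.mem_iInf] using hcon
    rw [h] at hvW
    exact hv ((Submodule.mem_bot ℂ).1 hvW)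
  · obtain ⟨i, hi⟩ := hne
    apply hi
    ext u
    have hu : u ∈ W.toSubmodule := by rw [h]; exact Submodule.mem_top
    rw [hW] at hu
    simp only [Submodule.mem_iInf, LinearMap.mem_ker] at hu
    exact hu i

lemma exists_youngProj_ne_zero {V : Type*} [AddCommGroup V] [Module ℂ V]
    {ρ : Representation ℂ (Perm (Fin n)) V} {ε : Perm (Fin n) →* ℤˣ} {f : Fin n → Fin n}
    (h : youngProj ε f ρ ≠ 0) : ∃ v, youngProj ε f ρ v ≠ 0 := by
  by_contra! hcon
  exact h (LinearMap.ext hcon)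

lemma eq_zero_of_eq_neg {V : Type*} [AddCommGroup V] [Module ℂ V] {x : V} (h : x = -x) :
    x = 0 := by
  have h2 : (2 : ℂ) • x = 0 := by rw [two_smul, ← eq_neg_iff_add_eq_zero]; exact h
  simpa using h2

lemma epsC_one (σ : Perm (Fin n)) : epsC (1 : Perm (Fin n) →* ℤˣ) σ = 1 := by simp [epsC]

lemma epsC_sign_swap {i j : Fin n} (h : i ≠ j) : epsC Perm.sign (swap i j) = -1 := by
  simp [epsC, Perm.sign_swap h]

/-- A translate of a Young-invariant vector is fixed by the transpositions inside the translated
fibres. -/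
lemma swap_translate {V : Type*} [AddCommGroup V] [Module ℂ V]
    (ρ : Representation ℂ (Perm (Fin n)) V) (f : Fin n → Fin n) (σ : Perm (Fin n)) (u : V)
    {i j : Fin n} (h : f (σ⁻¹ i) = f (σ⁻¹ j)) :
    ρ (swap i j) (ρ σ (youngProj 1 f ρ u)) = ρ σ (youngProj 1 f ρ u) := by
  have h1 : swap i j * σ = σ * swap (σ⁻¹ i) (σ⁻¹ j) := by
    rw [Equiv.mul_swap_eq_swap_mul]; simp
  rw [← Module.End.mul_apply, ← map_mul, h1, map_mul, Module.End.mul_apply,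
    map_youngProj 1 f ρ (swap_mem_fibStab h), epsC_one, one_smul]

/-- If an irreducible representation has both a vector invariant under the Young subgroup of `f`
and a vector alternating under that of `g`, some translate of the fibres of `f` meets each fibre
of `g` at most once: a transposition common to both subgroups would act by `1` and by `-1`. -/
lemma exists_translate_of_youngProj {V : Type*} [AddCommGroup V] [Module ℂ V]
    (ρ : Representation ℂ (Perm (Fin n)) V) [hρ : ρ.IsIrreducible] {f g : Fin n → Fin n}
    (hf : youngProj 1 f ρ ≠ 0) (hg : youngProj Perm.sign g ρ ≠ 0) :
    ∃ σ : Perm (Fin n), ∀ i j, f (σ i) = f (σ j) → g i = g j → i = j := by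
  obtain ⟨u, hu⟩ := exists_youngProj_ne_zero hf
  obtain ⟨σ, hσ⟩ := exists_apply_ne_zero ρ (fun σ : Perm (Fin n) => youngProj Perm.sign g ρ ∘ₗ ρ σ)
    (fun σ τ => ⟨σ * τ, fun v hv => by simpa [map_mul] using hv⟩)
    ⟨1, by simpa [Module.End.one_eq_id] using hg⟩ hu
  refine ⟨σ⁻¹, fun i j h1 h2 => ?_⟩
  by_contra hij
  apply hσ
  have key := youngProj_map Perm.sign g ρ (swap_mem_fibStab h2) (ρ σ (youngProj 1 f ρ u))
  rw [swap_translate ρ f σ u h1, epsC_sign_swap hij, neg_one_smul] at key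
  exact eq_zero_of_eq_neg key

/-- A nonzero invariant trilinear map on irreducible representations forces a transversality
between Young-invariant vectors of the first two and an alternating vector of the third. -/
lemma exists_translates_of_trilinear {V₁ V₂ V₃ U : Type*} [AddCommGroup V₁] [Module ℂ V₁]
    [AddCommGroup V₂] [Module ℂ V₂] [AddCommGroup V₃] [Module ℂ V₃] [AddCommGroup U] [Module ℂ U]
    (ρ₁ : Representation ℂ (Perm (Fin n)) V₁) (ρ₂ : Representation ℂ (Perm (Fin n)) V₂)
    (ρ₃ : Representation ℂ (Perm (Fin n)) V₃)
    [ρ₁.IsIrreducible] [ρ₂.IsIrreducible] [ρ₃.IsIrreducible]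
    (T : V₁ →ₗ[ℂ] V₂ →ₗ[ℂ] V₃ →ₗ[ℂ] U) (hT : T ≠ 0)
    (hinv : ∀ τ x y z, T (ρ₁ τ x) (ρ₂ τ y) (ρ₃ τ z) = T x y z)
    {f₁ f₂ g : Fin n → Fin n} (h₁ : youngProj 1 f₁ ρ₁ ≠ 0) (h₂ : youngProj 1 f₂ ρ₂ ≠ 0)
    (h₃ : youngProj Perm.sign g ρ₃ ≠ 0) :
    ∃ σ τ : Perm (Fin n), ∀ i j, f₁ (σ i) = f₁ (σ j) → f₂ (τ i) = f₂ (τ j) → g i = g j →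
      i = j := by
  obtain ⟨u, hu⟩ := exists_youngProj_ne_zero h₁
  obtain ⟨v, hv⟩ := exists_youngProj_ne_zero h₂
  obtain ⟨w, hw⟩ := exists_youngProj_ne_zero h₃
  have cancel₁ : ∀ τ x, ρ₁ τ (ρ₁ τ⁻¹ x) = x := by simp
  have cancel₂ : ∀ τ x, ρ₂ τ (ρ₂ τ⁻¹ x) = x := by simp
  have cancel₃ : ∀ τ x, ρ₃ τ (ρ₃ τ⁻¹ x) = x := by simp
  obtain ⟨⟨y, z⟩, hyz⟩ := exists_apply_ne_zero ρ₁
    (fun p : V₂ × V₃ => (T.flip p.1).flip p.2)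
    (fun p τ => ⟨(ρ₂ τ⁻¹ p.1, ρ₃ τ⁻¹ p.2), fun x hx => by
      simp only [LinearMap.flip_apply] at hx ⊢
      rw [← hinv τ, cancel₂, cancel₃] at hx
      exact hx⟩)
    (by
      by_contra! hcon
      apply hT
      ext x y z
      exact LinearMap.congr_fun (hcon (y, z)) x) hu
  obtain ⟨⟨σ, z⟩, hz⟩ := exists_apply_ne_zero ρ₂
    (fun p : Perm (Fin n) × V₃ => (T (ρ₁ p.1 (youngProj 1 f₁ ρ₁ u))).flip p.2)
    (fun p τ => ⟨(τ⁻¹ * p.1, ρ₃ τ⁻¹ p.2), fun x hx => by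
      simp only [LinearMap.flip_apply, map_mul, Module.End.mul_apply] at hx ⊢
      rw [← hinv τ, cancel₁, cancel₃] at hx
      exact hx⟩)
    ⟨(1, z), fun h => hyz (by simpa using LinearMap.congr_fun h y)⟩ hv
  obtain ⟨⟨σ, τ⟩, hστ⟩ := exists_apply_ne_zero ρ₃
    (fun p : Perm (Fin n) × Perm (Fin n) =>
      T (ρ₁ p.1 (youngProj 1 f₁ ρ₁ u)) (ρ₂ p.2 (youngProj 1 f₂ ρ₂ v)))
    (fun p τ => ⟨(τ⁻¹ * p.1, τ⁻¹ * p.2), fun x hx => by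
      simp only [map_mul, Module.End.mul_apply] at hx ⊢
      rw [← hinv τ, cancel₁, cancel₂] at hx
      exact hx⟩)
    ⟨(σ, 1), fun h => hz (by simpa using LinearMap.congr_fun h z)⟩ hw
  refine ⟨σ⁻¹, τ⁻¹, fun i j hi hj hg => ?_⟩
  by_contra hij
  apply hστ
  -- The transposition `swap i j` fixes the first two vectors and negates the third.
  have key := hinv (swap i j) (ρ₁ σ (youngProj 1 f₁ ρ₁ u)) (ρ₂ τ (youngProj 1 f₂ ρ₂ v))
    (youngProj Perm.sign g ρ₃ w)
  rw [swap_translate ρ₁ f₁ σ u hi, swap_translate ρ₂ f₂ τ v hj,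
    map_youngProj Perm.sign g ρ₃ (swap_mem_fibStab hg), epsC_sign_swap hij, neg_one_smul,
    map_neg] at key
  exact eq_zero_of_eq_neg key.symm

/-- If `V₁ ⊗ V₂ ⊗ V₃` has nonzero invariants, averaging over the group is a nonzero invariant
trilinear map, so the transversality applies. -/
lemma exists_translates_of_kronecker {V₁ V₂ V₃ : Type*} [AddCommGroup V₁] [Module ℂ V₁]
    [AddCommGroup V₂] [Module ℂ V₂] [AddCommGroup V₃] [Module ℂ V₃] [FiniteDimensional ℂ V₁]
    [FiniteDimensional ℂ V₂] [FiniteDimensional ℂ V₃]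
    (ρ₁ : Representation ℂ (Perm (Fin n)) V₁) (ρ₂ : Representation ℂ (Perm (Fin n)) V₂)
    (ρ₃ : Representation ℂ (Perm (Fin n)) V₃)
    [ρ₁.IsIrreducible] [ρ₂.IsIrreducible] [ρ₃.IsIrreducible]
    (hsum : ∑ σ, ρ₁.character σ * ρ₂.character σ * ρ₃.character σ ≠ 0)
    {f₁ f₂ g : Fin n → Fin n} (h₁ : youngProj 1 f₁ ρ₁ ≠ 0) (h₂ : youngProj 1 f₂ ρ₂ ≠ 0)
    (h₃ : youngProj Perm.sign g ρ₃ ≠ 0) :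
    ∃ σ τ : Perm (Fin n), ∀ i j, f₁ (σ i) = f₁ (σ j) → f₂ (τ i) = f₂ (τ j) → g i = g j →
      i = j := by
  -- The sum over the group has trace equal to the character sum, hence is nonzero.
  let R := ρ₁.tprod (ρ₂.tprod ρ₃)
  let Q := ∑ σ, R σ
  have hQ : Q ≠ 0 := by
    intro h
    apply hsum
    have : LinearMap.trace ℂ _ Q = 0 := by rw [h, map_zero]
    rw [← this, map_sum]
    refine Finset.sum_congr rfl fun σ _ => ?_
    change _ = R.character σ
    simp [R, mul_assoc]
  have hQR : ∀ τ u, Q (R τ u) = Q u := by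
    intro τ u
    simp only [Q, LinearMap.sum_apply]
    rw [← Equiv.sum_comp (Equiv.mulRight τ) (fun σ => R σ u)]
    simp [map_mul]
  refine exists_translates_of_trilinear ρ₁ ρ₂ ρ₃
    (TensorProduct.lcurry (.id ℂ) V₂ V₃ _ ∘ₗ TensorProduct.curry Q) ?_ ?_ h₁ h₂ h₃
  · intro h
    apply hQ
    refine TensorProduct.ext_threefold' fun x y z => ?_
    simpa using LinearMap.congr_fun (LinearMap.congr_fun (LinearMap.congr_fun h x) y) z
  · intro τ x y z
    simpa [R] using hQR τ (x ⊗ₜ[ℂ] (y ⊗ₜ[ℂ] z))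

end Irreducible

/-! ### Existence of irreducible characters of a given shape -/

section Existence

open scoped MonoidAlgebra

variable {n : ℕ}

/-- `ψ` is the character of an irreducible unbundled finite-dimensional representation. -/
def IsIrrChar (n : ℕ) (ψ : Perm (Fin n) → ℂ) : Prop :=
  ∃ (V : Type) (_ : AddCommGroup V) (_ : Module ℂ V) (_ : FiniteDimensional ℂ V)
    (ρ : Representation ℂ (Perm (Fin n)) V), ρ.IsIrreducible ∧ ρ.character = ψ

open CategoryTheory in
/-- Categorical simplicity in `FDRep` gives irreducibility: the inclusion of a nonzero
subrepresentation is a nonzero monomorphism, hence an isomorphism. -/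
lemma isIrreducible_of_simple (V : FDRep ℂ (Perm (Fin n))) [Simple V] :
    Representation.IsIrreducible V.ρ := by
  have : Nontrivial (Subrepresentation V.ρ) := by
    refine ⟨⊥, ⊤, fun h => ?_⟩
    have h1 : 𝟙 V = 0 := by
      ext v
      have hv : v ∈ (⊤ : Subrepresentation V.ρ) := Submodule.mem_top
      rw [← h] at hv
      have : v = 0 := (Submodule.mem_bot ℂ).1 hv
      rw [this]
      simp
    exact id_nonzero V h1
  refine ⟨fun W => ?_⟩
  let i : FDRep.of W.toRepresentation ⟶ V :=
    { hom := InducedCategory.homMk (ModuleCat.ofHom W.toSubmodule.subtype)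
      comm := fun g => by ext x; rfl }
  have hi_apply : ∀ x : W.toSubmodule, i x = (x : V) := fun _ => rfl
  have : Mono i := by
    apply ConcreteCategory.mono_of_injective
    intro x y hxy
    exact Subtype.ext hxy
  by_cases hi : i = 0
  · left
    apply Subrepresentation.toSubmodule_injective
    refine (Submodule.eq_bot_iff _).2 fun x hx => ?_
    have h1 := hi_apply ⟨x, hx⟩
    rw [hi] at h1
    exact h1.symm
  · right
    have := isIso_of_mono_of_nonzero hi
    apply Subrepresentation.toSubmodule_injective
    refine (Submodule.eq_top_iff').2 fun x => ?_
    obtain ⟨y, hy⟩ := (ConcreteCategory.bijective_of_isIso i).2 x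
    rw [← hy]
    exact Subtype.prop (p := fun z => z ∈ W.toSubmodule) y

lemma IsIrreducibleCharacter.isIrrChar {ψ : Perm (Fin n) → ℂ} (h : IsIrreducibleCharacter n ψ) :
    IsIrrChar n ψ := by
  obtain ⟨V, hV, rfl⟩ := h
  exact ⟨V, inferInstance, inferInstance, inferInstance, V.ρ, isIrreducible_of_simple V, rfl⟩

/-- The group algebra element acting as `youngProj ε f`. -/
noncomputable def youngElt (ε : Perm (Fin n) →* ℤˣ) (f : Fin n → Fin n) : ℂ[Perm (Fin n)] :=
  ∑ σ ∈ fibStab f, MonoidAlgebra.single σ (epsC ε σ)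

lemma asAlgebraHom_youngElt {V : Type*} [AddCommGroup V] [Module ℂ V]
    (ε : Perm (Fin n) →* ℤˣ) (f : Fin n → Fin n) (ρ : Representation ℂ (Perm (Fin n)) V) :
    ρ.asAlgebraHom (youngElt ε f) = youngProj ε f ρ := by
  simp [youngElt, youngProj, Representation.asAlgebraHom_single]

/-- If the fibres of `f` and `g` are transverse, only the pair `(1, 1)` contributes to the
coefficient of the identity in the Young symmetriser, which is therefore nonzero. -/
lemma youngElt_mul_ne_zero {f g : Fin n → Fin n} (hfg : ∀ i j, f i = f j → g i = g j → i = j) :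
    youngElt Perm.sign g * youngElt 1 f ≠ 0 := by
  have hinter : ∀ σ, σ ∈ fibStab f → σ ∈ fibStab g → σ = 1 := by
    intro σ h1 h2
    rw [mem_fibStab] at h1 h2
    exact Equiv.ext fun x => hfg (σ x) x (congrFun h1 x) (congrFun h2 x)
  intro h
  have h1 : (youngElt Perm.sign g * youngElt 1 f).coeff 1 = 0 := by rw [h]; rfl
  rw [youngElt, youngElt, Finset.sum_mul_sum, MonoidAlgebra.coeff_sum, Finsupp.finsetSum_apply,
    Finset.sum_eq_single_of_mem 1 (one_mem_fibStab g), MonoidAlgebra.coeff_sum,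
    Finsupp.finsetSum_apply, Finset.sum_eq_single_of_mem 1 (one_mem_fibStab f)] at h1
  · simp [MonoidAlgebra.single_mul_single, epsC] at h1
  · intro σ _ hσ
    rw [MonoidAlgebra.single_mul_single, MonoidAlgebra.coeff_single, one_mul,
      Finsupp.single_eq_of_ne (Ne.symm hσ)]
  · intro τ hτ hτ1
    rw [MonoidAlgebra.coeff_sum, Finsupp.finsetSum_apply]
    refine Finset.sum_eq_zero fun σ hσ => ?_
    rw [MonoidAlgebra.single_mul_single, MonoidAlgebra.coeff_single,
      Finsupp.single_eq_of_ne]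
    intro hmul
    apply hτ1
    apply hinter _ _ hτ
    rw [eq_inv_of_mul_eq_one_left hmul.symm]
    exact inv_mem_fibStab hσ

/-- A simple module on which the Young symmetriser acts nontrivially has both a nonzero row
projection and a nonzero column projection. -/
lemma exists_isIrrChar_of_module {f g : Fin n → Fin n} (N : Type) [AddCommGroup N]
    [Module ℂ N] [Module ℂ[Perm (Fin n)] N] [IsScalarTower ℂ ℂ[Perm (Fin n)] N]
    [IsSimpleModule ℂ[Perm (Fin n)] N] (x : N)
    (hx : (youngElt Perm.sign g * youngElt 1 f) • x ≠ 0) :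
    ∃ ψ, IsIrrChar n ψ ∧ youngSum 1 f ψ ≠ 0 ∧ youngSum Perm.sign g ψ ≠ 0 := by
  let ρ : Representation ℂ (Perm (Fin n)) N := Representation.ofModule' N
  have hρ : ∀ (r : ℂ[Perm (Fin n)]) (y : N), ρ.asAlgebraHom r y = r • y := by
    intro r y
    simp [ρ, Representation.ofModule', Representation.asAlgebraHom]
  have hnt : Nontrivial N := IsSimpleModule.nontrivial ℂ[Perm (Fin n)] N
  have hirr : ρ.IsIrreducible := by
    have : Nontrivial (Subrepresentation ρ) := by
      refine ⟨⊥, ⊤, fun h => ?_⟩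
      obtain ⟨y, hy⟩ := exists_ne (0 : N)
      have hv : y ∈ (⊤ : Subrepresentation ρ) := Submodule.mem_top
      rw [← h] at hv
      exact hy ((Submodule.mem_bot ℂ).1 hv)
    refine ⟨fun W => ?_⟩
    let W' : Submodule ℂ[Perm (Fin n)] N :=
      { carrier := W.toSubmodule
        add_mem' := fun ha hb => W.toSubmodule.add_mem ha hb
        zero_mem' := W.toSubmodule.zero_mem
        smul_mem' := by
          intro r y hy
          induction r using MonoidAlgebra.induction_on with
          | of σ =>
            rw [← hρ, Representation.asAlgebraHom_of]
            exact W.apply_mem_toSubmodule σ hy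
          | add a b ha hb => rw [add_smul]; exact W.toSubmodule.add_mem ha hb
          | smul c a ha => rw [smul_assoc]; exact W.toSubmodule.smul_mem c ha }
    rcases eq_bot_or_eq_top W' with h | h
    · left
      apply Subrepresentation.toSubmodule_injective
      refine (Submodule.eq_bot_iff _).2 fun y hy => ?_
      have : y ∈ W' := hy
      rwa [h, Submodule.mem_bot] at this
    · right
      apply Subrepresentation.toSubmodule_injective
      refine (Submodule.eq_top_iff').2 fun y => ?_
      have : y ∈ W' := h ▸ Submodule.mem_top
      exact this
  have : FiniteDimensional ℂ N := by
    have : Module.Finite ℂ ℂ[Perm (Fin n)] := inferInstance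
    have : Module.Finite ℂ[Perm (Fin n)] N := inferInstance
    exact Module.Finite.trans ℂ[Perm (Fin n)] N
  have hP : ∀ (ε : Perm (Fin n) →* ℤˣ) (h : Fin n → Fin n) (y : N),
      youngProj ε h ρ y = (youngElt ε h • y : N) := by
    intro ε h y
    rw [← asAlgebraHom_youngElt, hρ]
  rw [mul_smul] at hx
  refine ⟨ρ.character, ⟨N, _, _, this, ρ, hirr, rfl⟩, ?_, ?_⟩
  · rw [youngSum_ne_zero_iff]
    intro h
    apply hx
    have h1 : (youngElt 1 f • x : N) = 0 := by rw [← hP, h]; rfl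
    rw [h1, smul_zero]
  · rw [youngSum_ne_zero_iff]
    intro h
    apply hx
    rw [← hP, h]; rfl

/-- If the fibres of `f` and `g` are transverse, the Young symmetriser is nonzero, so some
irreducible constituent of the group algebra has both an invariant and an alternating vector. -/
lemma exists_isIrrChar_of_transverse {f g : Fin n → Fin n}
    (hfg : ∀ i j, f i = f j → g i = g j → i = j) :
    ∃ ψ, IsIrrChar n ψ ∧ youngSum 1 f ψ ≠ 0 ∧ youngSum Perm.sign g ψ ≠ 0 := by
  obtain ⟨N, hN, x, hx⟩ : ∃ N : Submodule ℂ[Perm (Fin n)] ℂ[Perm (Fin n)],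
      IsSimpleModule ℂ[Perm (Fin n)] N ∧
      ∃ x : N, (youngElt Perm.sign g * youngElt 1 f) • x ≠ 0 := by
    by_contra! hcon
    have hall : ∀ x ∈ (⊤ : Submodule ℂ[Perm (Fin n)] ℂ[Perm (Fin n)]),
        (youngElt Perm.sign g * youngElt 1 f) • x = 0 := by
      intro x hx
      rw [← IsSemisimpleModule.sSup_simples_eq_top, sSup_eq_iSup'] at hx
      refine Submodule.iSup_induction _
        (motive := fun x => (youngElt Perm.sign g * youngElt 1 f) • x = 0) hx ?_ (smul_zero _) ?_
      · exact fun N x hx => congrArg Subtype.val (hcon N N.2 ⟨x, hx⟩)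
      · intro x y hx hy
        rw [smul_add, hx, hy, add_zero]
    apply youngElt_mul_ne_zero hfg
    simpa using hall 1 Submodule.mem_top
  exact exists_isIrrChar_of_module N x hx

end Existence

/-! ### Counting irreducible characters -/

section Classification

variable {n : ℕ}

lemma IsIrrChar.sum_mul_inv_of_ne {ψ φ : Perm (Fin n) → ℂ} (hψ : IsIrrChar n ψ)
    (hφ : IsIrrChar n φ) (hne : ψ ≠ φ) : ∑ σ, ψ σ * φ σ⁻¹ = 0 := by
  obtain ⟨V, _, _, _, ρ, hρ, rfl⟩ := hψ
  obtain ⟨W, _, _, _, η, hη, rfl⟩ := hφ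
  have hcard : (Nat.card (Perm (Fin n)) : ℂ) ≠ 0 := Nat.cast_ne_zero.2 Nat.card_pos.ne'
  have : Invertible (Nat.card (Perm (Fin n)) : ℂ) := invertibleOfNonzero hcard
  have h := Representation.char_orthonormal ρ η
  rw [if_neg (fun ⟨e⟩ => hne (Representation.char_iso e).symm), mul_eq_zero] at h
  exact h.resolve_left (inv_ne_zero hcard)

lemma IsIrrChar.sum_mul_inv_self_ne_zero {ψ : Perm (Fin n) → ℂ} (hψ : IsIrrChar n ψ) :
    ∑ σ, ψ σ * ψ σ⁻¹ ≠ 0 := by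
  obtain ⟨V, _, _, _, ρ, hρ, rfl⟩ := hψ
  have hcard : (Nat.card (Perm (Fin n)) : ℂ) ≠ 0 := Nat.cast_ne_zero.2 Nat.card_pos.ne'
  have : Invertible (Nat.card (Perm (Fin n)) : ℂ) := invertibleOfNonzero hcard
  have h := Representation.char_orthonormal ρ ρ
  rw [if_pos ⟨Representation.Equiv.refl ρ⟩] at h
  intro h0
  rw [h0, mul_zero] at h
  exact zero_ne_one h

lemma IsIrrChar.eq_of_partition_eq {ψ : Perm (Fin n) → ℂ} (hψ : IsIrrChar n ψ)
    {σ τ : Perm (Fin n)} (h : σ.partition = τ.partition) : ψ σ = ψ τ := by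
  obtain ⟨V, _, _, _, ρ, hρ, rfl⟩ := hψ
  obtain ⟨c, hc⟩ := isConj_iff.1 (Perm.partition_eq_of_isConj.2 h)
  rw [← hc, Representation.char_conj]

/-- There are at most as many irreducible characters as conjugacy classes, so an injective family
of them indexed by partitions exhausts them all. -/
lemma IsIrrChar.exists_eq_of_injective {X : n.Partition → Perm (Fin n) → ℂ}
    (hX : ∀ p, IsIrrChar n (X p)) (hinj : Function.Injective X) {ψ : Perm (Fin n) → ℂ}
    (hψ : IsIrrChar n ψ) : ∃ p, X p = ψ := by
  by_contra! hne
  let b : Option n.Partition → Perm (Fin n) → ℂ := fun o => o.elim ψ X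
  have hb : ∀ o, IsIrrChar n (b o) := by
    rintro (_ | p)
    · exact hψ
    · exact hX p
  have hbinj : Function.Injective b := by
    rintro (_ | p) (_ | q) h
    · rfl
    · exact absurd h.symm (hne q)
    · exact absurd h (hne p)
    · exact congrArg some (hinj h)
  have hli : LinearIndependent ℂ b := by
    rw [Fintype.linearIndependent_iff]
    intro c hc o
    have h1 : ∑ σ, (∑ i, c i • b i) σ * b o σ⁻¹ = 0 := by rw [hc]; simp
    have h2 : ∑ σ, (∑ i, c i • b i) σ * b o σ⁻¹ = ∑ i, c i * ∑ σ, b i σ * b o σ⁻¹ := by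
      simp only [Finset.sum_apply, Pi.smul_apply, smul_eq_mul, Finset.sum_mul, Finset.mul_sum,
        mul_assoc]
      exact Finset.sum_comm
    rw [h2, Finset.sum_eq_single o, mul_eq_zero] at h1
    · exact h1.resolve_right (hb o).sum_mul_inv_self_ne_zero
    · intro i _ hi
      rw [(hb i).sum_mul_inv_of_ne (hb o) (fun h => hi (hbinj h)), mul_zero]
    · simp
  have hfac : ∀ o, ∃ φ : (Fintype.card (Fin n)).Partition → ℂ,
      LinearMap.funLeft ℂ ℂ (Perm.partition (α := Fin n)) φ = b o := by
    intro o
    refine ⟨Function.extend Perm.partition (b o) 0, ?_⟩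
    have hf : Function.FactorsThrough (b o) (Perm.partition (α := Fin n)) :=
      fun σ τ h => (hb o).eq_of_partition_eq h
    funext σ
    exact hf.extend_apply 0 σ
  choose φ hφ using hfac
  have hφli : LinearIndependent ℂ φ := by
    apply LinearIndependent.of_comp (LinearMap.funLeft ℂ ℂ (Perm.partition (α := Fin n)))
    have : (LinearMap.funLeft ℂ ℂ (Perm.partition (α := Fin n)) : _ → _) ∘ φ = b := funext hφ
    rwa [this]
  have hcard := hφli.fintype_card_le_finrank
  rw [Module.finrank_fintype_fun_eq_card, Fintype.card_option, Fintype.card_fin] at hcard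
  omega

end Classification

/-! ### Tableaux, dominance and the depth inequality -/

section Combinatorics

variable {n : ℕ}

lemma exists_map_univ_eq {α : Type*} (M : Multiset α) (hM : M.card = n) :
    ∃ s : Fin n → α, Finset.univ.val.map s = M := by
  induction M using Quotient.inductionOn with
  | h L =>
    have hL : L.length = n := hM
    subst hL
    exact ⟨L.get, by simp [Fin.univ_val_map]⟩

lemma parts_card_le (p : n.Partition) : p.parts.card ≤ n := by
  have h := Multiset.card_nsmul_le_sum (s := p.parts) (a := 1) fun x hx => p.parts_pos hx
  simpa [p.parts_sum] using h

/-- If the parts of `p` are the nonzero values of `s`, then for `t > 0` the column of index `t` can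
be counted on the index set of `s`. -/
lemma card_filter_parts {p : n.Partition} {s : Fin n → ℕ}
    (hs : (Finset.univ.val.map s).filter (0 < ·) = p.parts) {t : ℕ} (ht : 0 < t) :
    (p.parts.filter (t ≤ ·)).card = (Finset.univ.filter fun r => t ≤ s r).card := by
  rw [← hs, Multiset.filter_filter, Multiset.filter_map, Multiset.card_map, Finset.card_def,
    Finset.filter_val]
  congr 1
  refine Multiset.filter_congr fun r _ => ?_
  simp only [Function.comp_apply]
  omega

/-- The Young diagram of `p`, with cells numbered by `Fin n`: `f` is the row index and `g` the
column index of a cell. -/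
lemma exists_tableau (p : n.Partition) : ∃ f g : Fin n → Fin n,
    (∀ i j, f i = f j → g i = g j → i = j) ∧ contentMS n f = p.parts ∧
    ∀ c, (Finset.univ.filter fun x => g x = c).card
      = (p.parts.filter ((c : ℕ) + 1 ≤ ·)).card := by
  -- The row lengths, padded with empty rows so as to be indexed by `Fin n`.
  obtain ⟨s, hs⟩ := exists_map_univ_eq (n := n) (p.parts + Multiset.replicate (n - p.parts.card) 0)
    (by rw [Multiset.card_add, Multiset.card_replicate]; exact Nat.add_sub_cancel' (parts_card_le p))
  have hsf : (Finset.univ.val.map s).filter (0 < ·) = p.parts := by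
    rw [hs, Multiset.filter_add, Multiset.filter_eq_self.2 fun a ha => p.parts_pos ha,
      Multiset.filter_eq_nil.2 fun a ha => by simp [Multiset.eq_of_mem_replicate ha], add_zero]
  have hsum : ∑ c, s c = n := by
    have : (Finset.univ.val.map s).sum = n := by
      rw [hs, Multiset.sum_add, p.parts_sum, Multiset.sum_replicate, smul_zero, add_zero]
    exact this
  have hle : ∀ c, s c ≤ n := fun c =>
    (Finset.single_le_sum (fun _ _ => Nat.zero_le _) (Finset.mem_univ c)).trans hsum.le
  have e : Fin n ≃ Σ c : Fin n, Fin (s c) := Fintype.equivOfCardEq (by simp [hsum])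
  refine ⟨fun i => (e i).1, fun i => ⟨(e i).2, (e i).2.2.trans_le (hle _)⟩, ?_, ?_, ?_⟩
  · intro i j h1 h2
    apply e.injective
    refine Sigma.ext h1 ?_
    rw [Fin.heq_ext_iff (congrArg s h1)]
    exact congrArg Fin.val h2
  · rw [contentMS, ← hsf]
    congr 1
    refine Multiset.map_congr rfl fun c _ => ?_
    rw [← Fintype.card_fin (s c), ← Finset.card_univ]
    symm
    refine Finset.card_bij (fun j _ => e.symm ⟨c, j⟩) (by simp) ?_ ?_
    · intro a _ b _ h
      simpa using h
    · intro i hi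
      obtain rfl : (e i).1 = c := by simpa using hi
      exact ⟨(e i).2, Finset.mem_univ _, by simp⟩
  · intro c
    rw [card_filter_parts hsf (Nat.succ_pos _)]
    refine Finset.card_bij (fun i _ => (e i).1) ?_ ?_ ?_
    · intro i hi
      simp only [Finset.mem_filter, Finset.mem_univ, true_and] at hi ⊢
      rw [← hi]
      exact (e i).2.2
    · intro i hi j hj h1
      simp only [Finset.mem_filter, Finset.mem_univ, true_and] at hi hj
      apply e.injective
      refine Sigma.ext h1 ?_
      rw [Fin.heq_ext_iff (congrArg s h1)]
      exact congrArg Fin.val (hi.trans hj.symm)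
    · intro r hr
      simp only [Finset.mem_filter, Finset.mem_univ, true_and] at hr
      exact ⟨e.symm ⟨r, ⟨c, hr⟩⟩, Finset.mem_filter.2 ⟨Finset.mem_univ _, Fin.ext
        (congrArg (fun z : Σ c : Fin n, Fin (s c) => (z.2 : ℕ)) (e.apply_symm_apply _))⟩, by simp⟩

/-- Greedily choosing `k` largest values of `b`. -/
lemma exists_largest {α : Type*} [Fintype α] [DecidableEq α] (b : α → ℕ) (k : ℕ) :
    ∃ K : Finset α, K.card ≤ k ∧
      ∀ t, min (Finset.univ.filter fun c => t ≤ b c).card k ≤ (K.filter fun c => t ≤ b c).card := by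
  induction k with
  | zero => exact ⟨∅, by simp⟩
  | succ k ih =>
    obtain ⟨K, hK, h⟩ := ih
    rcases (Kᶜ).eq_empty_or_nonempty with h0 | h0
    · rw [Finset.compl_eq_empty_iff] at h0
      exact ⟨K, by omega, fun t => by rw [h0]; exact min_le_left _ _⟩
    · obtain ⟨c, hc, hmax⟩ := Finset.exists_max_image Kᶜ b h0
      rw [Finset.mem_compl] at hc
      refine ⟨insert c K, by rw [Finset.card_insert_of_notMem hc]; omega, fun t => ?_⟩
      by_cases ht : t ≤ b c
      · rw [Finset.filter_insert, if_pos ht,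
          Finset.card_insert_of_notMem (fun h => hc (Finset.mem_filter.1 h).1)]
        have := h t
        omega
      · refine (min_le_left _ _).trans (Finset.card_le_card fun x hx => ?_)
        simp only [Finset.mem_filter, Finset.mem_univ, true_and] at hx
        refine Finset.mem_filter.2 ⟨Finset.mem_insert_of_mem ?_, hx⟩
        by_contra hxK
        exact ht (hx.trans (hmax x (Finset.mem_compl.2 hxK)))

/-- If the rows of a filling of shape `q` can be placed so that no column of `p` meets a row twice,
then `p` dominates `q`. -/
lemma dominates_of_transverse {p q : n.Partition} {h g : Fin n → Fin n}
    (hhg : ∀ i j, h i = h j → g i = g j → i = j) (hh : contentMS n h = q.parts)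
    (hg : ∀ c, (Finset.univ.filter fun x => g x = c).card
      = (p.parts.filter ((c : ℕ) + 1 ≤ ·)).card) : Dominates n p q := by
  intro k
  let b : Fin n → ℕ := fun c => (Finset.univ.filter fun i => h i = c).card
  obtain ⟨K, hK, hmin⟩ := exists_largest b k
  calc topSum n q k
      ≤ ∑ t ∈ Finset.Icc 1 n, (K.filter fun c => t ≤ b c).card := by
        refine Finset.sum_le_sum fun t ht => ?_
        rw [card_filter_parts hh (Finset.mem_Icc.1 ht).1]
        exact hmin t
    _ = ∑ c ∈ K, ((Finset.Icc 1 n).filter fun t => t ≤ b c).card := by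
        simp only [Finset.card_filter]
        exact Finset.sum_comm
    _ ≤ ∑ c ∈ K, b c := by
        refine Finset.sum_le_sum fun c _ => ?_
        calc _ ≤ (Finset.Icc 1 (b c)).card := Finset.card_le_card fun t ht => by
              simp only [Finset.mem_filter, Finset.mem_Icc] at ht ⊢
              omega
          _ = b c := by simp
    _ = (Finset.univ.filter fun x => h x ∈ K).card := by
        rw [Finset.card_eq_sum_card_fiberwise (f := h) (t := K) (fun x hx => by simpa using hx)]
        refine Finset.sum_congr rfl fun c hc => ?_
        rw [Finset.filter_filter]
        refine congrArg Finset.card (?_ : (Finset.univ.filter fun i => h i = c) = _)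
        ext x
        simp only [Finset.mem_filter, Finset.mem_univ, true_and]
        exact ⟨fun hx => ⟨hx ▸ hc, hx⟩, fun hx => hx.2⟩
    _ = ∑ c, ((Finset.univ.filter fun x => h x ∈ K).filter fun x => g x = c).card :=
        Finset.card_eq_sum_card_fiberwise (fun x _ => Finset.mem_coe.2 (Finset.mem_univ _))
    _ ≤ ∑ c : Fin n, min (p.parts.filter ((c : ℕ) + 1 ≤ ·)).card k := by
        refine Finset.sum_le_sum fun c _ => le_min ?_ ?_
        · rw [← hg]
          exact Finset.card_le_card (Finset.filter_subset_filter _ (Finset.filter_subset _ _))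
        · refine le_trans (Finset.card_le_card_of_injOn h ?_ ?_) hK
          · intro x hx
            simp only [Finset.coe_filter, Finset.mem_filter, Finset.mem_univ, true_and,
              Set.mem_ofPred_eq] at hx
            exact hx.1
          · intro x hx y hy hxy
            simp only [Finset.coe_filter, Finset.mem_filter, Finset.mem_univ, true_and,
              Set.mem_ofPred_eq] at hx hy
            exact hhg x y hxy (hx.2.trans hy.2.symm)
    _ = topSum n p k := by
        rw [Fin.sum_univ_eq_sum_range fun c => min (p.parts.filter (c + 1 ≤ ·)).card k, topSum,
          Finset.range_eq_Ico, Finset.sum_Ico_add' (fun c => min (p.parts.filter (c ≤ ·)).card k)]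
        rfl

lemma topSum_succ (p : n.Partition) (k : ℕ) : topSum n p (k + 1) = topSum n p k +
    ((Finset.Icc 1 n).filter fun t => k < (p.parts.filter (t ≤ ·)).card).card := by
  rw [topSum, topSum, Finset.card_filter, ← Finset.sum_add_distrib]
  refine Finset.sum_congr rfl fun t _ => ?_
  split_ifs <;> omega

/-- The set of columns longer than `k` is an initial segment, hence determined by its size. -/
lemma lt_card_iff (p : n.Partition) (k : ℕ) {t : ℕ} (ht : t ∈ Finset.Icc 1 n) :
    k < (p.parts.filter (t ≤ ·)).card ↔
      t ≤ ((Finset.Icc 1 n).filter fun t => k < (p.parts.filter (t ≤ ·)).card).card := by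
  rw [Finset.mem_Icc] at ht
  have anti : ∀ u v, u ≤ v →
      (p.parts.filter (v ≤ ·)).card ≤ (p.parts.filter (u ≤ ·)).card := fun u v huv =>
    Multiset.card_le_card (Multiset.monotone_filter_right _ fun x hx => huv.trans hx)
  constructor
  · intro h
    calc t = (Finset.Icc 1 t).card := by simp
      _ ≤ _ := Finset.card_le_card fun u hu => by
        rw [Finset.mem_Icc] at hu
        rw [Finset.mem_filter, Finset.mem_Icc]
        exact ⟨⟨hu.1, hu.2.trans ht.2⟩, h.trans_le (anti _ _ hu.2)⟩
  · intro h
    by_contra hcon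
    have : ((Finset.Icc 1 n).filter fun t => k < (p.parts.filter (t ≤ ·)).card).card
        ≤ (Finset.Icc 1 (t - 1)).card := Finset.card_le_card fun u hu => by
      rw [Finset.mem_filter, Finset.mem_Icc] at hu
      rw [Finset.mem_Icc]
      refine ⟨hu.1.1, ?_⟩
      by_contra hlt
      exact hcon (hu.2.trans_le (anti t u (by omega)))
    rw [Nat.card_Icc] at this
    omega

lemma dominates_antisymm {p q : n.Partition} (hpq : Dominates n p q) (hqp : Dominates n q p) :
    p = q := by
  have htop : ∀ k, topSum n p k = topSum n q k := fun k => le_antisymm (hqp k) (hpq k)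
  have hcount : ∀ t, 0 < t →
      (p.parts.filter (t ≤ ·)).card = (q.parts.filter (t ≤ ·)).card := by
    intro t ht
    by_cases htn : t ≤ n
    · have hiff : ∀ k, k < (p.parts.filter (t ≤ ·)).card ↔ k < (q.parts.filter (t ≤ ·)).card := by
        intro k
        have hmem : t ∈ Finset.Icc 1 n := Finset.mem_Icc.2 ⟨ht, htn⟩
        have h1 := htop (k + 1)
        rw [topSum_succ, topSum_succ, htop k] at h1
        rw [lt_card_iff p k hmem, lt_card_iff q k hmem, Nat.add_left_cancel h1]
      exact eq_of_forall_lt_iff hiff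
    · have hzero : ∀ r : n.Partition, (r.parts.filter (t ≤ ·)).card = 0 := fun r => by
        rw [Multiset.card_eq_zero, Multiset.filter_eq_nil]
        intro a ha hta
        have := Multiset.le_sum_of_mem ha
        rw [r.parts_sum] at this
        omega
      rw [hzero, hzero]
  have hsplit : ∀ (r : n.Partition) (t : ℕ), (r.parts.filter (t ≤ ·)).card
      = r.parts.count t + (r.parts.filter (t + 1 ≤ ·)).card := by
    intro r t
    rw [Multiset.count_eq_card_filter_eq, ← Multiset.card_add, Multiset.filter_add_filter,
      Multiset.filter_eq_nil.2 fun a _ (h : t = a ∧ t + 1 ≤ a) => by omega, add_zero]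
    congr 1
    exact Multiset.filter_congr fun a _ => by omega
  apply Nat.Partition.ext
  refine Multiset.ext.2 fun t => ?_
  rcases Nat.eq_zero_or_pos t with rfl | ht
  · rw [Multiset.count_eq_zero_of_notMem fun h => (p.parts_pos h).ne rfl,
      Multiset.count_eq_zero_of_notMem fun h => (q.parts_pos h).ne rfl]
  · have h1 := hsplit p t
    rw [hcount t ht, hsplit q t, hcount (t + 1) t.succ_pos] at h1
    omega

lemma exists_sup_le_card_fiber (hn : 0 < n) {p : n.Partition} {f : Fin n → Fin n}
    (hf : contentMS n f = p.parts) :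
    ∃ c, p.parts.sup ≤ (Finset.univ.filter fun i => f i = c).card := by
  obtain ⟨c, -, hc⟩ := Finset.exists_max_image Finset.univ
    (fun c => (Finset.univ.filter fun i => f i = c).card) ⟨⟨0, hn⟩, Finset.mem_univ _⟩
  refine ⟨c, Multiset.sup_le.2 fun a ha => ?_⟩
  rw [← hf, contentMS, Multiset.mem_filter, Multiset.mem_map] at ha
  obtain ⟨⟨d, hd, rfl⟩, -⟩ := ha
  exact hc d (Finset.mem_univ _)

/-- Two rows of lengths `λ₁` and `μ₁` overlap in at least `λ₁ + μ₁ - n` points, which must lie in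
distinct columns of `ν`. -/
lemma depth_le_of_translates (hn : 0 < n) {l m nu : n.Partition} {f₁ f₂ g : Fin n → Fin n}
    (h₁ : contentMS n f₁ = l.parts) (h₂ : contentMS n f₂ = m.parts)
    (hg : ∀ c, (Finset.univ.filter fun x => g x = c).card
      = (nu.parts.filter ((c : ℕ) + 1 ≤ ·)).card)
    {σ τ : Perm (Fin n)}
    (h : ∀ i j, f₁ (σ i) = f₁ (σ j) → f₂ (τ i) = f₂ (τ j) → g i = g j → i = j) :
    depthP n nu ≤ depthP n l + depthP n m := by
  obtain ⟨c₁, hc₁⟩ := exists_sup_le_card_fiber hn h₁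
  obtain ⟨c₂, hc₂⟩ := exists_sup_le_card_fiber hn h₂
  have hperm : ∀ (f : Fin n → Fin n) (π : Perm (Fin n)) c,
      (Finset.univ.filter fun i => f (π i) = c).card
        = (Finset.univ.filter fun i => f i = c).card := fun f π c =>
    Finset.card_bij (fun i _ => π i) (by simp) (fun _ _ _ _ h => π.injective h)
      (fun j hj => ⟨π.symm j, by simpa using hj, by simp⟩)
  rw [← hperm f₁ σ] at hc₁
  rw [← hperm f₂ τ] at hc₂
  have hunion := Finset.card_union_add_card_inter
    (Finset.univ.filter fun i => f₁ (σ i) = c₁) (Finset.univ.filter fun i => f₂ (τ i) = c₂)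
  have hle : ((Finset.univ.filter fun i => f₁ (σ i) = c₁) ∪
      (Finset.univ.filter fun i => f₂ (τ i) = c₂)).card ≤ n :=
    (Finset.card_le_univ _).trans_eq (Fintype.card_fin n)
  have hinter : ((Finset.univ.filter fun i => f₁ (σ i) = c₁) ∩
      (Finset.univ.filter fun i => f₂ (τ i) = c₂)).card ≤ (Finset.range nu.parts.sup).card := by
    refine Finset.card_le_card_of_injOn (fun i => (g i : ℕ)) ?_ ?_
    · intro i _
      have hpos : 0 < (nu.parts.filter ((g i : ℕ) + 1 ≤ ·)).card := by
        rw [← hg]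
        exact Finset.card_pos.2 ⟨i, by simp⟩
      obtain ⟨a, ha⟩ := Multiset.card_pos_iff_exists_mem.1 hpos
      rw [Multiset.mem_filter] at ha
      have := Multiset.le_sup ha.1
      simp only [Finset.coe_range, Set.mem_Iio]
      omega
    · intro i hi j hj hij
      simp only [Finset.coe_inter, Finset.coe_filter, Finset.mem_univ, true_and, Set.mem_inter_iff,
        Set.mem_ofPred_eq] at hi hj
      exact h i j (hi.1.trans hj.1.symm) (hi.2.trans hj.2.symm) (Fin.ext hij)
  rw [Finset.card_range] at hinter
  have hsup : ∀ r : n.Partition, r.parts.sup ≤ n := fun r =>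
    Multiset.sup_le.2 fun a ha => (Multiset.le_sum_of_mem ha).trans_eq r.parts_sum
  have := hsup l
  have := hsup m
  unfold depthP
  omega

end Combinatorics

/-! ### Specht labelling and Kronecker coefficients -/

section Identification

variable {n : ℕ}

lemma IsIrrChar.youngSum_eq_natCast {ψ : Perm (Fin n) → ℂ} (hψ : IsIrrChar n ψ)
    (ε : Perm (Fin n) →* ℤˣ) (f : Fin n → Fin n) : ∃ k : ℕ, youngSum ε f ψ = k := by
  obtain ⟨V, _, _, _, ρ, hρ, rfl⟩ := hψ
  exact _root_.youngSum_eq_natCast ε f ρ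

/-- The permutation character of shape `q` is a sum over fillings of content `q`, so pairing with
it counts invariants of Young subgroups. -/
lemma innerChar_permChar (q : n.Partition) (ψ : Perm (Fin n) → ℂ) :
    innerChar n (fun σ => (permChar n q σ : ℂ)) ψ = (Nat.factorial n : ℂ)⁻¹ *
      ∑ f ∈ Finset.univ.filter (fun f : Fin n → Fin n => contentMS n f = q.parts),
        (starRingEnd ℂ) (youngSum 1 f ψ) := by
  rw [innerChar]
  congr 1
  simp only [permChar, ← Finset.filter_filter, Finset.card_filter, Nat.cast_sum, Finset.sum_mul,
    youngSum, epsC_one, one_mul, map_sum, fibStab, Finset.sum_filter (s := Finset.univ)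
      (p := fun σ : Perm (Fin n) => _ ∘ ⇑σ = _)]
  rw [Finset.sum_comm]
  refine Finset.sum_congr rfl fun f _ => Finset.sum_congr rfl fun σ _ => ?_
  split_ifs <;> simp

/-- Multiplicities are natural numbers, so no cancellation can occur: `ψ` occurs in the
permutation character iff some Young subgroup of that shape has an invariant. -/
lemma IsIrrChar.innerChar_permChar_ne_zero_iff {ψ : Perm (Fin n) → ℂ} (hψ : IsIrrChar n ψ)
    (q : n.Partition) : innerChar n (fun σ => (permChar n q σ : ℂ)) ψ ≠ 0 ↔
      ∃ f, contentMS n f = q.parts ∧ youngSum 1 f ψ ≠ 0 := by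
  choose k hk using fun f => hψ.youngSum_eq_natCast 1 f
  rw [innerChar_permChar]
  simp only [hk, map_natCast, ← Nat.cast_sum]
  rw [mul_ne_zero_iff, and_iff_right (inv_ne_zero (Nat.cast_ne_zero.2 n.factorial_ne_zero)),
    Nat.cast_ne_zero, Ne, Finset.sum_eq_zero_iff]
  simp

/-- The von Neumann lemma for representations: row invariants of shape `q` and column
alternating vectors of shape `p` force `p ⊵ q`. -/
lemma IsIrrChar.dominates {ψ : Perm (Fin n) → ℂ} (hψ : IsIrrChar n ψ) {p q : n.Partition}
    {f g : Fin n → Fin n} (hf : contentMS n f = q.parts)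
    (hg : ∀ c, (Finset.univ.filter fun x => g x = c).card
      = (p.parts.filter ((c : ℕ) + 1 ≤ ·)).card)
    (hfψ : youngSum 1 f ψ ≠ 0) (hgψ : youngSum Perm.sign g ψ ≠ 0) : Dominates n p q := by
  obtain ⟨V, _, _, _, ρ, hρ, rfl⟩ := hψ
  rw [youngSum_ne_zero_iff] at hfψ hgψ
  obtain ⟨σ, hσ⟩ := exists_translate_of_youngProj ρ hfψ hgψ
  refine dominates_of_transverse (h := f ∘ σ) hσ ?_ hg
  rw [← hf, contentMS, contentMS]
  congr 1
  refine Multiset.map_congr rfl fun c _ => ?_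
  exact Finset.card_bij (fun i _ => σ i) (by simp) (fun _ _ _ _ h => σ.injective h)
    (fun j hj => ⟨σ.symm j, by simpa using hj, by simp⟩)

/-- Any family satisfying the triangularity conditions of Young's rule is the family of Specht
characters, in the sense that `χ p` has row invariants and column alternating vectors of
shape `p`. -/
lemma exists_row_col {χ : n.Partition → Perm (Fin n) → ℂ} (hirr : ∀ p, IsIrrChar n (χ p))
    (hocc : ∀ p, innerChar n (fun σ => (permChar n p σ : ℂ)) (χ p) ≠ 0)
    (hnocc : ∀ p q : n.Partition, Dominates n q p → q ≠ p →
      innerChar n (fun σ => (permChar n q σ : ℂ)) (χ p) = 0) (p : n.Partition) :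
    ∃ f g : Fin n → Fin n, contentMS n f = p.parts ∧
      (∀ c, (Finset.univ.filter fun x => g x = c).card
        = (p.parts.filter ((c : ℕ) + 1 ≤ ·)).card) ∧
      youngSum 1 f (χ p) ≠ 0 ∧ youngSum Perm.sign g (χ p) ≠ 0 := by
  choose f g hfg hf hg using fun q : n.Partition => exists_tableau q
  choose X hX hXf hXg using fun q => exists_isIrrChar_of_transverse (hfg q)
  have hinj : Function.Injective X := by
    intro q r h
    refine dominates_antisymm ?_ ?_
    · exact (hX q).dominates (hf r) (hg q) (h ▸ hXf r) (hXg q)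
    · exact (hX r).dominates (hf q) (hg r) (h ▸ hXf q) (hXg r)
  obtain ⟨q, hq⟩ := IsIrrChar.exists_eq_of_injective hX hinj (hirr p)
  obtain ⟨f', hf', hfocc⟩ := ((hirr p).innerChar_permChar_ne_zero_iff p).1 (hocc p)
  have hdom : Dominates n q p := (hirr p).dominates hf' (hg q) hfocc (hq ▸ hXg q)
  have hqp : q = p := by
    by_contra hne
    exact ((hirr p).innerChar_permChar_ne_zero_iff q).2 ⟨f q, hf q, hq ▸ hXf q⟩
      (hnocc p q hdom hne)
  subst hqp
  exact ⟨f q, g q, hf q, hg q, hq ▸ hXf q, hq ▸ hXg q⟩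

lemma depth_le_of_kron (hn : 0 < n) {χ : n.Partition → Perm (Fin n) → ℂ}
    (hirr : ∀ p, IsIrrChar n (χ p))
    (hocc : ∀ p, innerChar n (fun σ => (permChar n p σ : ℂ)) (χ p) ≠ 0)
    (hnocc : ∀ p q : n.Partition, Dominates n q p → q ≠ p →
      innerChar n (fun σ => (permChar n q σ : ℂ)) (χ p) = 0)
    {l m nu : n.Partition} (h : kron n χ l m nu ≠ 0) :
    depthP n nu ≤ depthP n l + depthP n m := by
  obtain ⟨f₁, -, hf₁, -, h₁, -⟩ := exists_row_col hirr hocc hnocc l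
  obtain ⟨f₂, -, hf₂, -, h₂, -⟩ := exists_row_col hirr hocc hnocc m
  obtain ⟨-, g, -, hg, -, h₃⟩ := exists_row_col hirr hocc hnocc nu
  have hsum := right_ne_zero_of_mul h
  obtain ⟨V₁, _, _, _, ρ₁, hρ₁, e₁⟩ := hirr l
  obtain ⟨V₂, _, _, _, ρ₂, hρ₂, e₂⟩ := hirr m
  obtain ⟨V₃, _, _, _, ρ₃, hρ₃, e₃⟩ := hirr nu
  rw [← e₁, youngSum_ne_zero_iff] at h₁
  rw [← e₂, youngSum_ne_zero_iff] at h₂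
  rw [← e₃, youngSum_ne_zero_iff] at h₃
  simp only [← e₁, ← e₂, ← e₃] at hsum
  obtain ⟨σ, τ, hστ⟩ := exists_translates_of_kronecker ρ₁ ρ₂ ρ₃ hsum h₁ h₂ h₃
  exact depth_le_of_translates hn hf₁ hf₂ hg hστ

lemma kron_comm (χ : n.Partition → Perm (Fin n) → ℂ) (l m nu : n.Partition) :
    kron n χ m l nu = kron n χ l m nu := by
  simp only [kron, mul_comm (χ m _)]

lemma kron_rotate (χ : n.Partition → Perm (Fin n) → ℂ) (l m nu : n.Partition) :
    kron n χ m nu l = kron n χ l m nu := by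
  simp only [kron, mul_assoc, mul_comm (χ l _)]

end Identification

end KroneckerDepth

/-- Theorem 2.9.22 of James–Kerber: if `λ, μ, ν` are partitions of `n` with
`g_{λ,μ}^ν ≠ 0`, then `|d_λ − d_μ| ≤ d_ν ≤ d_λ + d_μ`, where `d_λ = n − λ_1`
is the depth.  Here the family `χ` is pinned down as the Specht labeling of
the irreducible characters of `S_n`: `χ_λ` is the unique irreducible
character which occurs in the permutation character of shape `λ` but in no
permutation character of a shape strictly dominating `λ` (Young's rule). -/
theorem kron_ne_zero_depth_bounds (n : ℕ) (hn : 0 < n)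
    (χ : n.Partition → Equiv.Perm (Fin n) → ℂ)
    (hirr : ∀ p, IsIrreducibleCharacter n (χ p))
    (hocc : ∀ p, innerChar n (fun σ => (permChar n p σ : ℂ)) (χ p) ≠ 0)
    (hnocc : ∀ p q : n.Partition, Dominates n q p → q ≠ p →
      innerChar n (fun σ => (permChar n q σ : ℂ)) (χ p) = 0)
    (l m nu : n.Partition) (h : kron n χ l m nu ≠ 0) :
    ((depthP n l : ℤ) - (depthP n m : ℤ)).natAbs ≤ depthP n nu ∧
    depthP n nu ≤ depthP n l + depthP n m := by
  have hirr' : ∀ p, IsIrrChar n (χ p) := fun p => (hirr p).isIrrChar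
  have h' : kron n χ m nu l ≠ 0 := by rwa [kron_rotate]
  have h'' : kron n χ l nu m ≠ 0 := by rwa [← kron_rotate, kron_comm]
  have h1 := depth_le_of_kron hn hirr' hocc hnocc h
  have h2 := depth_le_of_kron hn hirr' hocc hnocc h'
  have h3 := depth_le_of_kron hn hirr' hocc hnocc h''
  omega
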